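/- Let G be a weighted graph with terminal set K of size k, fix a terminal v_k ∈ K, and let 𝒰 be the collection of nonempty subsets U ⊆ K with v_k ∉ U. If X ⊆ 𝒰 is a family with A(X) ≠ ∅, then X is upward closed within 𝒰: for all P ∈ X and Q ∈ 𝒰 with P ⊆ Q, one has Q ∈ X. -/

import Mathlib

open scoped Classical

/-- A weighted graph with a distinguished embedded set of terminals indexed by `κ`:
a finite vertex type `V`, an embedding `ι : κ ↪ V` of the terminals, and a symmetric
nonnegative capacity function `c` on pairs of vertices. -/
structure WeightedGraph (κ : Type) where
  V : Type
  [fintypeV : Fintype V]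
  ι : κ ↪ V
  c : V → V → ℝ
  symm : ∀ u v, c u v = c v u
  nonneg : ∀ u v, 0 ≤ c u v

namespace WeightedGraph

variable {κ : Type}

instance (G : WeightedGraph κ) : Fintype G.V := G.fintypeV

/-- The cut function `h_G(A) = Σ_{u ∈ A, v ∉ A} c(u,v)`. -/
noncomputable def cutval (G : WeightedGraph κ) (A : Finset G.V) : ℝ :=
  ∑ u ∈ A, ∑ v ∈ Aᶜ, G.c u v

/-- The vertex sets realizing the terminal partition `(U, K \ U)`. -/
noncomputable def cutSets (G : WeightedGraph κ) (U : Finset κ) : Finset (Finset G.V) :=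
  Finset.univ.filter fun A => ∀ x : κ, G.ι x ∈ A ↔ x ∈ U

theorem cutSets_nonempty (G : WeightedGraph κ) (U : Finset κ) : (G.cutSets U).Nonempty := by
  refine ⟨U.image G.ι, ?_⟩
  simp [cutSets, Finset.mem_image, G.ι.injective.eq_iff]

/-- The terminal cut function `h_K^G(U) = min { h_G(A) : A ∩ K = U }`. -/
noncomputable def termCut (G : WeightedGraph κ) (U : Finset κ) : ℝ :=
  (G.cutSets U).inf' (G.cutSets_nonempty U) G.cutval

/-- `H` is a mimicking network for `(G, K)`: all minimum terminal cut values agree. -/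
def IsMimicking (G H : WeightedGraph κ) : Prop :=
  ∀ U : Finset κ, H.termCut U = G.termCut U

/-- `H` is a quotient (contraction) of `G` along the surjection `f`: terminals map to
terminals, and capacities between distinct classes are sums of the original capacities. -/
def IsQuotient (G H : WeightedGraph κ) (f : G.V → H.V) : Prop :=
  Function.Surjective f ∧ (∀ x : κ, f (G.ι x) = H.ι x) ∧
    ∀ y z : H.V, y ≠ z →
      H.c y z = ∑ u ∈ Finset.univ.filter (fun u => f u = y),
        ∑ v ∈ Finset.univ.filter (fun v => f v = z), G.c u v

end WeightedGraph

/-- `A` is a minimum-cardinality minimizer realizing the minimum terminal cut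
`h_K^G(U)`: it induces the terminal partition `(U, K \ U)`, achieves the minimum cut
value, and has minimum cardinality among all such minimizers. -/
def WeightedGraph.IsMinCutSet {κ : Type} (G : WeightedGraph κ) (U : Finset κ)
    (A : Finset G.V) : Prop :=
  (∀ x : κ, G.ι x ∈ A ↔ x ∈ U) ∧ G.cutval A = G.termCut U ∧
    ∀ B : Finset G.V, (∀ x : κ, G.ι x ∈ B ↔ x ∈ U) → G.cutval B = G.termCut U →
      A.card ≤ B.card

/-- `𝒰`: the collection of nonempty subsets `U ⊆ K` not containing the fixed
terminal `t` (= `v_k`). -/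
noncomputable def terminalSubsets (κ : Type) [Fintype κ] (t : κ) : Finset (Finset κ) :=
  Finset.univ.filter fun U : Finset κ => U.Nonempty ∧ t ∉ U

/-- `A(X) = (∩_{Z ∈ X} S(Z)) ∩ (∩_{W ∈ 𝒰 \ X} (V \ S(W)))`, the cluster of vertices
lying inside `S(Z)` exactly for the members `Z` of the family `X ⊆ 𝒰`. -/
noncomputable def region {κ : Type} [Fintype κ] (G : WeightedGraph κ) (t : κ)
    (S : Finset κ → Finset G.V) (X : Finset (Finset κ)) : Finset G.V :=
  Finset.univ.filter fun v : G.V =>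
    (∀ Z ∈ X, v ∈ S Z) ∧ ∀ W ∈ terminalSubsets κ t \ X, v ∉ S W

theorem WeightedGraph.cutval_eq_ite {κ : Type} (G : WeightedGraph κ) (A : Finset G.V) :
    G.cutval A = ∑ u, ∑ v, if u ∈ A ∧ v ∉ A then G.c u v else 0 := by
  unfold WeightedGraph.cutval
  rw [← Finset.sum_filter_add_sum_filter_not Finset.univ (fun u => u ∈ A)
    (fun u => ∑ v, if u ∈ A ∧ v ∉ A then G.c u v else 0)]
  rw [Finset.sum_eq_zero (s := Finset.univ.filter (fun u => ¬ u ∈ A)), add_zero]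
  · have h : Finset.univ.filter (fun u => u ∈ A) = A := by ext; simp
    rw [h]
    refine Finset.sum_congr rfl fun u hu => ?_
    simp only [hu, true_and]
    rw [← Finset.sum_filter]
    refine Finset.sum_congr ?_ fun _ _ => rfl
    ext; simp
  · intro u hu
    have hu' : u ∉ A := by simpa using hu
    simp [hu']

theorem WeightedGraph.cutval_submod {κ : Type} (G : WeightedGraph κ) (A B : Finset G.V) :
    G.cutval (A ∩ B) + G.cutval (A ∪ B) ≤ G.cutval A + G.cutval B := by
  simp only [WeightedGraph.cutval_eq_ite, ← Finset.sum_add_distrib]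
  refine Finset.sum_le_sum fun u _ => Finset.sum_le_sum fun v _ => ?_
  have := G.nonneg u v
  by_cases h1 : u ∈ A <;> by_cases h2 : u ∈ B <;> by_cases h3 : v ∈ A <;>
    by_cases h4 : v ∈ B <;> simp [h1, h2, h3, h4, this]

theorem WeightedGraph.termCut_le {κ : Type} (G : WeightedGraph κ) (U : Finset κ)
    (A : Finset G.V) (h : ∀ x : κ, G.ι x ∈ A ↔ x ∈ U) : G.termCut U ≤ G.cutval A :=
  Finset.inf'_le _ (by simpa [WeightedGraph.cutSets] using h)

/-- if `A(X) ≠ ∅` then the family `X ⊆ 𝒰` is upward closed within `𝒰`. -/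
theorem region_nonempty_upward_closed {κ : Type} [Fintype κ] (G : WeightedGraph κ)
    (t : κ) (S : Finset κ → Finset G.V)
    (hS : ∀ U ∈ terminalSubsets κ t, G.IsMinCutSet U (S U))
    (X : Finset (Finset κ)) (hX : X ⊆ terminalSubsets κ t)
    (hne : (region G t S X).Nonempty) :
    ∀ P ∈ X, ∀ Q ∈ terminalSubsets κ t, P ⊆ Q → Q ∈ X := by
  intro P hP Q hQ hPQ
  by_contra hQX
  obtain ⟨v, hv⟩ := hne
  obtain ⟨hv1, hv2⟩ := (Finset.mem_filter.mp hv).2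
  have hvP := hv1 P hP
  have hvQ := hv2 Q (Finset.mem_sdiff.mpr ⟨hQ, hQX⟩)
  obtain ⟨p1, p2, p3⟩ := hS P (hX hP)
  obtain ⟨q1, q2, _⟩ := hS Q hQ
  have hi : ∀ x : κ, G.ι x ∈ S P ∩ S Q ↔ x ∈ P := fun x => by
    rw [Finset.mem_inter, p1, q1]
    exact ⟨fun h => h.1, fun h => ⟨h, hPQ h⟩⟩
  have hu : ∀ x : κ, G.ι x ∈ S P ∪ S Q ↔ x ∈ Q := fun x => by
    rw [Finset.mem_union, p1, q1]
    exact ⟨fun h => h.elim (fun h => hPQ h) id, Or.inr⟩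
  have h1 := G.termCut_le P _ hi
  have h2 := G.termCut_le Q _ hu
  have h3 := G.cutval_submod (S P) (S Q)
  have h4 := p3 _ hi (by linarith)
  have h5 := Finset.eq_of_subset_of_card_le Finset.inter_subset_left h4
  rw [← h5] at hvP
  exact hvQ (Finset.mem_inter.mp hvP).2
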